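/- The meta MWU algorithm over (d+1)·M prior-aware BM-reductions achieves comparator-adaptive Φ-regret: there is a universal constant C > 0 such that for every d ≥ 2, T ≥ 1, and every loss sequence ℓ_1,…,ℓ_T ∈ [0,1]^d, the iterates p_t of the algorithm satisfy Reg(φ) = Σ_{t=1}^T ⟨p_t − φ^T p_t, ℓ_t⟩ ≤ C·(√(T·log(1/π(φ))) + √(T·log d)) for every φ ∈ Φ_b, and consequently Reg(φ) ≤ C'·(√((1 + c_φ log d)·T) + √(T·log d)) for every φ ∈ S, for a universal constant C'. -/

import Mathlib

open Finset

/-- The binary row-stochastic matrix associated with a map `f : [d] → [d]`. -/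
def toMat (d : ℕ) (f : Fin d → Fin d) : Matrix (Fin d) (Fin d) ℝ :=
  fun i j => if f i = j then 1 else 0

/-- The set `Φ_b` of binary row-stochastic `d × d` matrices. -/
noncomputable def PhiB (d : ℕ) : Finset (Matrix (Fin d) (Fin d) ℝ) := by
  classical exact Finset.image (toMat d) Finset.univ

/-- A matrix is row-stochastic if every row lies in the simplex. -/
def RowStochastic {d : ℕ} (φ : Matrix (Fin d) (Fin d) ℝ) : Prop :=
  ∀ i, (∀ j, 0 ≤ φ i j) ∧ ∑ j, φ i j = 1

/-- A vector lies in the probability simplex `Δ(d)`. -/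
def InSimplex (d : ℕ) (p : Fin d → ℝ) : Prop :=
  (∀ i, 0 ≤ p i) ∧ ∑ i, p i = 1

/-- The `ψ`-induced weight of `φ`: `π_ψ(φ) = ∏ i ⟨ψ_{i:}, φ_{i:}⟩`. -/
noncomputable def piInd {d : ℕ} (ψ φ : Matrix (Fin d) (Fin d) ℝ) : ℝ :=
  ∏ i, ∑ j, ψ i j * φ i j

/-- `ψ^k = ((d-2)/(d-1))·1 e_k^T + (1/(d(d-1)))·1 1^T`. -/
noncomputable def psiK (d : ℕ) (k : Fin d) : Matrix (Fin d) (Fin d) ℝ :=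
  fun _ j => ((d : ℝ) - 2) / ((d : ℝ) - 1) * (if j = k then 1 else 0) + 1 / ((d : ℝ) * ((d : ℝ) - 1))

/-- `ψ^{d+1} = ((d-2)/(d-1))·I + (1/(d(d-1)))·1 1^T`. -/
noncomputable def psiSelf (d : ℕ) : Matrix (Fin d) (Fin d) ℝ :=
  fun i j => ((d : ℝ) - 2) / ((d : ℝ) - 1) * (if i = j then 1 else 0) + 1 / ((d : ℝ) * ((d : ℝ) - 1))

/-- The special prior `π = (1/(2d)) Σ_k π_{ψ^k} + (1/2) π_{ψ^{d+1}}`. -/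
noncomputable def priorPi (d : ℕ) (φ : Matrix (Fin d) (Fin d) ℝ) : ℝ :=
  1 / (2 * d) * ∑ k : Fin d, piInd (psiK d k) φ + 1 / 2 * piInd (psiSelf d) φ

/-- `d^self_φ`: the number of indices `i` whose row equals `e_i^T`. -/
noncomputable def dSelf {d : ℕ} (φ : Matrix (Fin d) (Fin d) ℝ) : ℕ :=
  Nat.card {i : Fin d // φ i = fun j => if j = i then (1 : ℝ) else 0}

/-- `d^unif_φ`: the maximum multiplicity in the multiset of rows of `φ`. -/
noncomputable def dUnif {d : ℕ} (φ : Matrix (Fin d) (Fin d) ℝ) : ℕ :=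
  Finset.univ.sup fun i : Fin d => Nat.card {j : Fin d // φ j = φ i}

/-- Complexity measure for binary row-stochastic matrices. -/
noncomputable def cB {d : ℕ} (φ : Matrix (Fin d) (Fin d) ℝ) : ℕ :=
  min (d - dSelf φ) (d - dUnif φ + 1)

/-- `Q_φ`: distributions over `Φ_b` (indexed by maps `f : [d] → [d]`) averaging to `φ`. -/
def QSet (d : ℕ) (φ : Matrix (Fin d) (Fin d) ℝ) : Set ((Fin d → Fin d) → ℝ) :=
  {q | (∀ f, 0 ≤ q f) ∧ (∑ f, q f = 1) ∧ ∀ i j, ∑ f, q f * toMat d f i j = φ i j}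

/-- Extended complexity measure `c_φ = inf_{q ∈ Q_φ} E_{φ'∼q}[c_{φ'}]`. -/
noncomputable def cGen (d : ℕ) (φ : Matrix (Fin d) (Fin d) ℝ) : ℝ :=
  sInf ((fun q => ∑ f : Fin d → Fin d, q f * (cB (toMat d f) : ℝ)) '' QSet d φ)

/-- Matrix inner product `⟨φ, p ℓ^T⟩`. -/
noncomputable def lossInner {d : ℕ} (φ : Matrix (Fin d) (Fin d) ℝ) (p ℓ : Fin d → ℝ) : ℝ :=
  ∑ i, ∑ j, φ i j * (p i * ℓ j)

/-- The mean matrix `E_{f∼q}[φ_f]` of a weight vector over binary matrices. -/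
noncomputable def mixMat (d : ℕ) (q : (Fin d → Fin d) → ℝ) : Matrix (Fin d) (Fin d) ℝ :=
  fun i j => ∑ f, q f * toMat d f i j

/-- KL divergence of `q` (a distribution over `Φ_b`, indexed by maps) from the prior `π`. -/
noncomputable def klPrior (d : ℕ) (q : (Fin d → Fin d) → ℝ) : ℝ :=
  ∑ f, q f * Real.log (q f / priorPi d (toMat d f))

/-- The kernel `K(B,A) = Σ_{φ∈Φ_b} π(φ) Π_{i,j : φ_{ij}=1} B_{ij} A_{ij}`. -/
noncomputable def kernelK (d : ℕ) (B A : Matrix (Fin d) (Fin d) ℝ) : ℝ := by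
  classical exact
    ∑ φ ∈ PhiB d, priorPi d φ * ∏ i, ∏ j, if φ i j = 1 then B i j * A i j else 1

/-- The stochastic matrices `ψ^1, …, ψ^{d+1}`, indexed by `k ∈ {1, …, d+1}`. -/
noncomputable def psiAll (d k : ℕ) : Matrix (Fin d) (Fin d) ℝ :=
  if k = d + 1 then psiSelf d
  else fun _ j =>
    ((d : ℝ) - 2) / ((d : ℝ) - 1) * (if (j : ℕ) + 1 = k then 1 else 0) +
      1 / ((d : ℝ) * ((d : ℝ) - 1))


/-!
Multiplicative weights compares the played strategy to any single base learner `(k, h)` at a cost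
of order `√(T log d)`, because the number of base learners is polynomial in `d` and stationarity
of `p_t` makes its loss the weighted average of the losses of the base learners. Row by row, base
learner `(k, h)` has regret at most `-log π_{ψ^k}(φ) / η_h + η_h T / 2` against a binary `φ`: the
losses of row `i` are bounded by `p_{t,i}`, and `∑ᵢ p_{t,i}² ≤ 1`. As `π` is an average of the
`π_{ψ^k}`, one of them is at least `π(φ)`, and since all `-log π_{ψ^k}(φ)` are at most `2 d²`, the
geometric grid of rates contains a nearly optimal one.

For binary `φ`, `-log π(φ) ≤ 3 + 2 c_φ log d`: for a suitable `k`, a row of `φ` that is the binary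
row favoured by `ψ^k` costs at most `2 / d`, and any other row at most `2 log d`. Regret is affine
in `φ` and the bound is concave and monotone in `c_φ`, so Jensen's inequality and the infimum over
decompositions carry it over to stochastic `φ`.
-/

section Tuning

lemma exists_two_pow_near {L : ℝ} {M : ℕ} (hM : 1 ≤ M) (hL₀ : 0 ≤ L) (hL : L ≤ 2 * 2 ^ M) :
    ∃ h ∈ Finset.Icc 1 M, L ≤ 2 * 2 ^ h ∧ (2 : ℝ) ^ h ≤ L + 2 := by
  induction M, hM using Nat.le_induction with
  | base => exact ⟨1, by simp, hL, by linarith⟩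
  | succ M _ ih =>
    rcases le_or_gt L (2 * 2 ^ M) with hle | hlt
    · obtain ⟨h, hh, hbounds⟩ := ih hle
      exact ⟨h, Finset.Icc_subset_Icc_right M.le_succ hh, hbounds⟩
    · exact ⟨M + 1, by simp, hL, by rw [pow_succ']; linarith⟩

lemma div_sqrt_add_sqrt_mul_eq {L T : ℝ} (hT : 0 < T) (hL : 0 < L) :
    L / √(L / T) + √(L / T) / 2 * T = 3 / 2 * √(T * L) := by
  rw [Real.sqrt_div hL.le, Real.sqrt_mul hT.le]
  field_simp [(Real.sqrt_pos.2 hL).ne', (Real.sqrt_pos.2 hT).ne']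
  rw [Real.sq_sqrt hL.le, Real.sq_sqrt hT.le]
  ring

lemma div_sqrt_add_sqrt_mul_le {L S T : ℝ} (hT : 0 < T) (hS : 0 < S) (hL : 0 ≤ L)
    (hLS : L ≤ 2 * S) (hSL : S ≤ L + 2) :
    L / √(S / T) + √(S / T) / 2 * T ≤ 2 * √(T * L) + √T := by
  have hs := Real.sqrt_pos.2 hS
  have hrescale : L / √(S / T) + √(S / T) / 2 * T = √T * (L / √S + √S / 2) := by
    rw [Real.sqrt_div hS.le]
    field_simp [hs.ne', (Real.sqrt_pos.2 hT).ne']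
    rw [Real.sq_sqrt hT.le]
    ring
  have hquot : L / √S ≤ 3 / 2 * √L := by
    have : √L ≤ 3 / 2 * √S := Real.sqrt_le_iff.2
      ⟨by positivity, by rw [mul_pow, Real.sq_sqrt hS.le]; linarith⟩
    rw [div_le_iff₀ hs]
    nlinarith [Real.sq_sqrt hL, Real.sqrt_nonneg L]
  have hsqrt : √S ≤ √L + 3 / 2 := Real.sqrt_le_iff.2
    ⟨by positivity, by nlinarith [Real.sq_sqrt hL, Real.sqrt_nonneg L]⟩
  rw [hrescale, Real.sqrt_mul hT.le]
  nlinarith [Real.sqrt_nonneg T]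

end Tuning

section ExponentialWeights

variable {ι : Type*} {s : Finset ι} {v L : ι → ℝ} {η : ℝ}

/-- The partition function of exponential weights on `s` with prior `v`, learning rate `η` and
loss vector `L`; it normalizes `expWeights` and is the potential of the regret analysis. -/
noncomputable def partitionFn (s : Finset ι) (v : ι → ℝ) (η : ℝ) (L : ι → ℝ) : ℝ :=
  ∑ i ∈ s, v i * Real.exp (-η * L i)

/-- The Gibbs distribution of prior `v`, i.e. the multiplicative-weights iterate on `s` after
total loss `L` at learning rate `η`. -/
noncomputable def expWeights (s : Finset ι) (v : ι → ℝ) (η : ℝ) (L : ι → ℝ) : ι → ℝ :=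
  fun i => v i * Real.exp (-η * L i) / partitionFn s v η L

/-- The total loss incurred by each expert before round `t`, where rounds are numbered from `1`. -/
noncomputable def cumLoss (g : ℕ → ι → ℝ) (t : ℕ) : ι → ℝ :=
  fun i => ∑ τ ∈ Finset.Ico 1 t, g τ i

lemma cumLoss_one (g : ℕ → ι → ℝ) : cumLoss g 1 = 0 := by
  ext i
  simp [cumLoss]

lemma cumLoss_succ (g : ℕ → ι → ℝ) {t : ℕ} (ht : 1 ≤ t) :
    cumLoss g (t + 1) = cumLoss g t + g t := by
  ext i
  simp [cumLoss, Finset.sum_Ico_succ_top ht]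

lemma partitionFn_zero (s : Finset ι) (v : ι → ℝ) (η : ℝ) :
    partitionFn s v η 0 = ∑ i ∈ s, v i := by
  simp [partitionFn]

lemma mul_exp_le_partitionFn (hv : ∀ i ∈ s, 0 ≤ v i) {i : ι} (hi : i ∈ s) :
    v i * Real.exp (-η * L i) ≤ partitionFn s v η L :=
  Finset.single_le_sum (f := fun i => v i * Real.exp (-η * L i))
    (fun j hj => mul_nonneg (hv j hj) (Real.exp_pos _).le) hi

lemma partitionFn_pos (hv : ∀ i ∈ s, 0 ≤ v i) (hsum : ∑ i ∈ s, v i = 1) :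
    0 < partitionFn s v η L := by
  obtain ⟨i, hi, hvi⟩ : ∃ i ∈ s, 0 < v i :=
    Finset.exists_lt_of_sum_lt (by simp [hsum])
  exact (mul_pos hvi (Real.exp_pos _)).trans_le (mul_exp_le_partitionFn hv hi)

lemma expWeights_zero (hsum : ∑ i ∈ s, v i = 1) : expWeights s v η 0 = v := by
  ext i
  simp [expWeights, partitionFn_zero, hsum]

lemma expWeights_nonneg (hv : ∀ i ∈ s, 0 ≤ v i) {i : ι} (hi : i ∈ s) :
    0 ≤ expWeights s v η L i :=
  div_nonneg (mul_nonneg (hv i hi) (Real.exp_pos _).le)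
    (Finset.sum_nonneg fun j hj => mul_nonneg (hv j hj) (Real.exp_pos _).le)

lemma sum_expWeights (hv : ∀ i ∈ s, 0 ≤ v i) (hsum : ∑ i ∈ s, v i = 1) :
    ∑ i ∈ s, expWeights s v η L i = 1 := by
  simp only [expWeights, ← Finset.sum_div]
  exact div_self (partitionFn_pos hv hsum).ne'

lemma expWeights_congr {v' : ι → ℝ} (h : ∀ i ∈ s, v i = v' i) {i : ι} (hi : i ∈ s) :
    expWeights s v η L i = expWeights s v' η L i := by
  simp only [expWeights, partitionFn]
  rw [h i hi, Finset.sum_congr rfl fun j hj => by rw [h j hj]]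

lemma mul_exp_neg_mul_add (hZ : partitionFn s v η L ≠ 0) (G : ι → ℝ) (i : ι) :
    v i * Real.exp (-η * (L + G) i) =
      partitionFn s v η L * (expWeights s v η L i * Real.exp (-η * G i)) := by
  rw [expWeights, Pi.add_apply, mul_add, Real.exp_add]
  field_simp

lemma partitionFn_add (hZ : partitionFn s v η L ≠ 0) (G : ι → ℝ) :
    partitionFn s v η (L + G) =
      partitionFn s v η L * partitionFn s (expWeights s v η L) η G :=
  (Finset.sum_congr rfl fun i _ => mul_exp_neg_mul_add hZ G i).trans (Finset.mul_sum ..).symm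

lemma expWeights_add (hZ : partitionFn s v η L ≠ 0) (G : ι → ℝ) :
    expWeights s v η (L + G) = expWeights s (expWeights s v η L) η G := by
  ext i
  rw [expWeights, mul_exp_neg_mul_add hZ, partitionFn_add hZ, mul_div_mul_left _ _ hZ]
  rfl

lemma exp_neg_le_one_sub_add_sq {x : ℝ} (hx : 0 ≤ x) :
    Real.exp (-x) ≤ 1 - x + x ^ 2 / 2 := by
  have hprod : 1 ≤ (1 - x + x ^ 2 / 2) * (1 + x + x ^ 2 / 2) := by
    nlinarith [sq_nonneg (x ^ 2)]
  have hnonneg : 0 ≤ 1 - x + x ^ 2 / 2 := by nlinarith [sq_nonneg (x - 1)]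
  rw [Real.exp_neg, inv_le_iff_one_le_mul₀ (Real.exp_pos x)]
  exact hprod.trans (mul_le_mul_of_nonneg_left (Real.quadratic_le_exp_of_nonneg hx) hnonneg)

lemma partitionFn_le_exp {G : ι → ℝ} {B : ℝ} (hv : ∀ i ∈ s, 0 ≤ v i)
    (hsum : ∑ i ∈ s, v i = 1) (hη : 0 ≤ η) (hG : ∀ i ∈ s, 0 ≤ G i ∧ G i ≤ B) :
    partitionFn s v η G ≤ Real.exp (-η * ∑ i ∈ s, v i * G i + η ^ 2 / 2 * B ^ 2) := by
  have hexp : ∀ i ∈ s, Real.exp (-η * G i) ≤ 1 - η * G i + η ^ 2 / 2 * B ^ 2 := by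
    intro i hi
    have hquad := exp_neg_le_one_sub_add_sq (mul_nonneg hη (hG i hi).1)
    have hsq : G i ^ 2 ≤ B ^ 2 := pow_le_pow_left₀ (hG i hi).1 (hG i hi).2 2
    rw [← neg_mul] at hquad
    nlinarith [mul_le_mul_of_nonneg_left hsq (sq_nonneg η)]
  calc partitionFn s v η G
      ≤ ∑ i ∈ s, v i * (1 - η * G i + η ^ 2 / 2 * B ^ 2) :=
        Finset.sum_le_sum fun i hi => mul_le_mul_of_nonneg_left (hexp i hi) (hv i hi)
    _ = ∑ i ∈ s, (v i * (1 + η ^ 2 / 2 * B ^ 2) - η * (v i * G i)) :=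
        Finset.sum_congr rfl fun i _ => by ring
    _ = (-η * ∑ i ∈ s, v i * G i + η ^ 2 / 2 * B ^ 2) + 1 := by
        rw [Finset.sum_sub_distrib, ← Finset.sum_mul, ← Finset.mul_sum, hsum]
        ring
    _ ≤ _ := Real.add_one_le_exp _

lemma partitionFn_cumLoss_le_exp {g : ℕ → ι → ℝ} {B : ℕ → ℝ} {T : ℕ} (hv : ∀ i ∈ s, 0 ≤ v i)
    (hsum : ∑ i ∈ s, v i = 1) (hη : 0 ≤ η)
    (hg : ∀ t ∈ Finset.Icc 1 T, ∀ i ∈ s, 0 ≤ g t i ∧ g t i ≤ B t) :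
    partitionFn s v η (cumLoss g (T + 1)) ≤
      Real.exp (∑ t ∈ Finset.Icc 1 T,
        (-η * ∑ i ∈ s, expWeights s v η (cumLoss g t) i * g t i + η ^ 2 / 2 * B t ^ 2)) := by
  induction T with
  | zero => simp [cumLoss_one, partitionFn_zero, hsum]
  | succ T ih =>
    rw [cumLoss_succ g (by omega), partitionFn_add (partitionFn_pos hv hsum).ne',
      Finset.sum_Icc_succ_top (by omega), Real.exp_add]
    exact mul_le_mul
      (ih fun t ht => hg t (Finset.Icc_subset_Icc_right T.le_succ ht))
      (partitionFn_le_exp (fun i hi => expWeights_nonneg hv hi) (sum_expWeights hv hsum) hη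
        (hg _ (Finset.mem_Icc.2 ⟨by omega, le_rfl⟩)))
      (partitionFn_pos (fun i hi => expWeights_nonneg hv hi) (sum_expWeights hv hsum)).le
      (Real.exp_pos _).le

theorem expWeights_regret_le {g : ℕ → ι → ℝ} {B : ℕ → ℝ} {T : ℕ} {i : ι}
    (hv : ∀ i ∈ s, 0 ≤ v i) (hsum : ∑ i ∈ s, v i = 1) (hη : 0 < η)
    (hg : ∀ t ∈ Finset.Icc 1 T, ∀ i ∈ s, 0 ≤ g t i ∧ g t i ≤ B t) (hi : i ∈ s) (hvi : 0 < v i) :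
    ∑ t ∈ Finset.Icc 1 T, (∑ j ∈ s, expWeights s v η (cumLoss g t) j * g t j - g t i) ≤
      -Real.log (v i) / η + η / 2 * ∑ t ∈ Finset.Icc 1 T, B t ^ 2 := by
  have hlog := Real.log_le_log (mul_pos hvi (Real.exp_pos _))
    ((mul_exp_le_partitionFn hv hi).trans (partitionFn_cumLoss_le_exp hv hsum hη.le hg))
  rw [Real.log_exp, Real.log_mul hvi.ne' (Real.exp_pos _).ne', Real.log_exp,
    Finset.sum_add_distrib, ← Finset.mul_sum, ← Finset.mul_sum, cumLoss,
    Finset.Ico_add_one_right_eq_Icc] at hlog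
  rw [Finset.sum_sub_distrib, ← mul_le_mul_iff_right₀ hη, mul_add, mul_div_cancel₀ _ hη.ne']
  linarith

lemma eq_expWeights_cumLoss {g w : ℕ → ι → ℝ} {T : ℕ} (hw₁ : ∀ i ∈ s, 0 ≤ w 1 i)
    (hsum : ∑ i ∈ s, w 1 i = 1)
    (hw : ∀ t ∈ Finset.Icc 1 T, ∀ i ∈ s, w (t + 1) i = expWeights s (w t) η (g t) i) :
    ∀ t ∈ Finset.Icc 1 T, ∀ i ∈ s, w t i = expWeights s (w 1) η (cumLoss g t) i := by
  intro t ht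
  obtain ⟨ht₁, htT⟩ := Finset.mem_Icc.1 ht
  induction t, ht₁ using Nat.le_induction with
  | base => simp [cumLoss_one, expWeights_zero hsum]
  | succ t ht₁ ih =>
    intro i hi
    have htmem : t ∈ Finset.Icc 1 T := Finset.mem_Icc.2 ⟨ht₁, by omega⟩
    rw [cumLoss_succ g ht₁, expWeights_add (partitionFn_pos hw₁ hsum).ne', hw t htmem i hi,
      expWeights_congr (ih htmem (by omega)) hi]

theorem mwu_uniform_regret_le {g w : ℕ → ι → ℝ} {T : ℕ} {i : ι} (hs : 1 < #s) (hT : 0 < T)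
    (hg : ∀ t ∈ Finset.Icc 1 T, ∀ i ∈ s, 0 ≤ g t i ∧ g t i ≤ 1)
    (hw₁ : ∀ i ∈ s, w 1 i = 1 / #s)
    (hw : ∀ t ∈ Finset.Icc 1 T, ∀ i ∈ s,
      w (t + 1) i = expWeights s (w t) (√(Real.log #s / T)) (g t) i) (hi : i ∈ s) :
    ∑ t ∈ Finset.Icc 1 T, (∑ j ∈ s, w t j * g t j - g t i) ≤ 3 / 2 * √(T * Real.log #s) := by
  have hN : (0 : ℝ) < #s := by positivity
  have hT' : (0 : ℝ) < T := by positivity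
  have hlog : 0 < Real.log #s := Real.log_pos (by exact_mod_cast hs)
  have hpos : ∀ i ∈ s, 0 < w 1 i := fun i hi => by rw [hw₁ i hi]; positivity
  have hsum : ∑ i ∈ s, w 1 i = 1 := by
    rw [Finset.sum_congr rfl hw₁, Finset.sum_const, nsmul_eq_mul, mul_one_div_cancel hN.ne']
  have hregret := expWeights_regret_le (fun i hi => (hpos i hi).le) hsum
    (Real.sqrt_pos.2 (div_pos hlog hT')) (B := fun _ => 1) hg hi (hpos i hi)
  have hclosed : ∀ t ∈ Finset.Icc 1 T, ∑ j ∈ s, w t j * g t j - g t i =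
      ∑ j ∈ s, expWeights s (w 1) (√(Real.log #s / T)) (cumLoss g t) j * g t j - g t i :=
    fun t ht => by
      rw [Finset.sum_congr rfl fun j hj => by
        rw [eq_expWeights_cumLoss (fun i hi => (hpos i hi).le) hsum hw t ht j hj]]
  rw [Finset.sum_congr rfl hclosed]
  refine hregret.trans_eq ?_
  rw [hw₁ i hi, one_div, Real.log_inv, neg_neg, ← div_sqrt_add_sqrt_mul_eq hT' hlog]
  simp only [one_pow, Finset.sum_const, Nat.card_Icc, Nat.add_sub_cancel, nsmul_eq_mul, mul_one]

end ExponentialWeights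

section LinearLoss

variable {d T : ℕ} {ℓ p : ℕ → Fin d → ℝ}

/-- The `Φ`-regret `∑ₜ ⟨pₜ - φᵀ pₜ, ℓₜ⟩` against the action modification `φ`, over the
rounds `1, …, T`. -/
noncomputable def phiRegret (T : ℕ) (ℓ p : ℕ → Fin d → ℝ) (φ : Matrix (Fin d) (Fin d) ℝ) : ℝ :=
  ∑ t ∈ Finset.Icc 1 T, ∑ i, (p t i - ∑ j, φ j i * p t j) * ℓ t i

lemma lossInner_toMat (f : Fin d → Fin d) (x y : Fin d → ℝ) :
    lossInner (toMat d f) x y = ∑ i, x i * y (f i) := by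
  simp [lossInner, toMat]

lemma lossInner_eq_sum_pushforward (φ : Matrix (Fin d) (Fin d) ℝ) (x y : Fin d → ℝ) :
    lossInner φ x y = ∑ i, (∑ j, φ j i * x j) * y i := by
  rw [lossInner, Finset.sum_comm]
  simp only [Finset.sum_mul, mul_assoc]

lemma lossInner_sum_smul {ι : Type*} (s : Finset ι) (q : ι → ℝ)
    (M : ι → Matrix (Fin d) (Fin d) ℝ) (x y : Fin d → ℝ) :
    lossInner (∑ a ∈ s, q a • M a) x y = ∑ a ∈ s, q a * lossInner (M a) x y := by
  simp only [lossInner, Matrix.sum_apply, Matrix.smul_apply, smul_eq_mul, Finset.sum_mul,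
    Finset.mul_sum, mul_assoc]
  rw [Finset.sum_comm (s := s)]
  exact Finset.sum_congr rfl fun i _ => by rw [Finset.sum_comm (s := s)]

lemma lossInner_mem_Icc {φ : Matrix (Fin d) (Fin d) ℝ} {x y : Fin d → ℝ}
    (hφ : RowStochastic φ) (hx : InSimplex d x) (hy : ∀ i, 0 ≤ y i ∧ y i ≤ 1) :
    0 ≤ lossInner φ x y ∧ lossInner φ x y ≤ 1 := by
  constructor
  · exact Finset.sum_nonneg fun i _ => Finset.sum_nonneg fun j _ =>
      mul_nonneg ((hφ i).1 j) (mul_nonneg (hx.1 i) (hy j).1)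
  · calc lossInner φ x y ≤ ∑ i, ∑ j, φ i j * x i :=
          Finset.sum_le_sum fun i _ => Finset.sum_le_sum fun j _ =>
            mul_le_mul_of_nonneg_left (mul_le_of_le_one_right (hx.1 i) (hy j).2) ((hφ i).1 j)
      _ = 1 := by simp only [← Finset.sum_mul, (hφ _).2, one_mul, hx.2]

lemma phiRegret_eq (φ : Matrix (Fin d) (Fin d) ℝ) :
    phiRegret T ℓ p φ =
      ∑ t ∈ Finset.Icc 1 T, (∑ i, p t i * ℓ t i - lossInner φ (p t) (ℓ t)) := by
  simp only [phiRegret, sub_mul, Finset.sum_sub_distrib, lossInner_eq_sum_pushforward]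

lemma phiRegret_sum_smul {ι : Type*} {s : Finset ι} {q : ι → ℝ} (hq : ∑ a ∈ s, q a = 1)
    (M : ι → Matrix (Fin d) (Fin d) ℝ) :
    phiRegret T ℓ p (∑ a ∈ s, q a • M a) = ∑ a ∈ s, q a * phiRegret T ℓ p (M a) := by
  simp only [phiRegret_eq, lossInner_sum_smul, Finset.sum_sub_distrib, mul_sub,
    ← Finset.sum_mul, hq, one_mul]
  rw [Finset.sum_comm (s := Finset.Icc 1 T) (t := s)]
  simp only [Finset.mul_sum]

end LinearLoss

section BMReduction

variable {d T : ℕ} {ψ : Matrix (Fin d) (Fin d) ℝ} {η : ℝ} {ℓ p : ℕ → Fin d → ℝ}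

/-- The round-`t` output of the prior-aware Blum–Mansour reduction with prior `ψ`: row `i` runs
exponential weights with prior `ψ i` on the losses `p τ i * ℓ τ`. -/
noncomputable def bmMatrix (ψ : Matrix (Fin d) (Fin d) ℝ) (η : ℝ) (ℓ p : ℕ → Fin d → ℝ) (t : ℕ) :
    Matrix (Fin d) (Fin d) ℝ :=
  fun i => expWeights Finset.univ (ψ i) η (cumLoss (fun τ j => p τ i * ℓ τ j) t)

lemma rowStochastic_bmMatrix (hψ : RowStochastic ψ) (t : ℕ) :
    RowStochastic (bmMatrix ψ η ℓ p t) := fun i =>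
  ⟨fun j => expWeights_nonneg (fun j _ => (hψ i).1 j) (Finset.mem_univ j),
    sum_expWeights (fun j _ => (hψ i).1 j) (hψ i).2⟩

lemma InSimplex.sum_sq_le_one {x : Fin d → ℝ} (hx : InSimplex d x) : ∑ i, x i ^ 2 ≤ 1 := by
  have hle : ∀ i, x i ≤ 1 := fun i => hx.2 ▸
    Finset.single_le_sum (fun j _ => hx.1 j) (Finset.mem_univ i)
  calc ∑ i, x i ^ 2 ≤ ∑ i, x i :=
        Finset.sum_le_sum fun i _ => pow_le_of_le_one (hx.1 i) (hle i) two_ne_zero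
    _ = 1 := hx.2

lemma piInd_toMat (ψ : Matrix (Fin d) (Fin d) ℝ) (f : Fin d → Fin d) :
    piInd ψ (toMat d f) = ∏ i, ψ i (f i) := by
  simp [piInd, toMat]

lemma neg_log_piInd_toMat {f : Fin d → Fin d} (hf : ∀ i, 0 < ψ i (f i)) :
    -Real.log (piInd ψ (toMat d f)) = ∑ i, -Real.log (ψ i (f i)) := by
  rw [piInd_toMat, Real.log_prod fun i _ => (hf i).ne', Finset.sum_neg_distrib]

theorem bmMatrix_regret_le {f : Fin d → Fin d} (hψ : RowStochastic ψ) (hf : ∀ i, 0 < ψ i (f i))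
    (hη : 0 < η) (hℓ : ∀ t ∈ Finset.Icc 1 T, ∀ i, 0 ≤ ℓ t i ∧ ℓ t i ≤ 1)
    (hp : ∀ t ∈ Finset.Icc 1 T, InSimplex d (p t)) :
    ∑ t ∈ Finset.Icc 1 T, (lossInner (bmMatrix ψ η ℓ p t) (p t) (ℓ t) -
        lossInner (toMat d f) (p t) (ℓ t)) ≤
      -Real.log (piInd ψ (toMat d f)) / η + η / 2 * T := by
  have hrow : ∀ i, ∑ t ∈ Finset.Icc 1 T,
      (∑ j, bmMatrix ψ η ℓ p t i j * (p t i * ℓ t j) - p t i * ℓ t (f i)) ≤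
        -Real.log (ψ i (f i)) / η + η / 2 * ∑ t ∈ Finset.Icc 1 T, p t i ^ 2 := fun i =>
    expWeights_regret_le (fun j _ => (hψ i).1 j) (hψ i).2 hη (B := fun t => p t i)
      (fun t ht j _ => ⟨mul_nonneg ((hp t ht).1 i) (hℓ t ht j).1,
        mul_le_of_le_one_right ((hp t ht).1 i) (hℓ t ht j).2⟩) (Finset.mem_univ _) (hf i)
  have hsq : ∑ t ∈ Finset.Icc 1 T, ∑ i, p t i ^ 2 ≤ T := by
    simpa using Finset.sum_le_sum fun t ht => (hp t ht).sum_sq_le_one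
  calc ∑ t ∈ Finset.Icc 1 T, (lossInner (bmMatrix ψ η ℓ p t) (p t) (ℓ t) -
        lossInner (toMat d f) (p t) (ℓ t))
      = ∑ i, ∑ t ∈ Finset.Icc 1 T,
          (∑ j, bmMatrix ψ η ℓ p t i j * (p t i * ℓ t j) - p t i * ℓ t (f i)) := by
        rw [Finset.sum_comm]
        simp only [lossInner_toMat]
        simp only [lossInner, Finset.sum_sub_distrib]
    _ ≤ ∑ i, (-Real.log (ψ i (f i)) / η + η / 2 * ∑ t ∈ Finset.Icc 1 T, p t i ^ 2) :=
        Finset.sum_le_sum fun i _ => hrow i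
    _ = -Real.log (piInd ψ (toMat d f)) / η +
          η / 2 * ∑ t ∈ Finset.Icc 1 T, ∑ i, p t i ^ 2 := by
        rw [Finset.sum_add_distrib, ← Finset.sum_div, ← Finset.mul_sum, neg_log_piInd_toMat hf,
          Finset.sum_comm]
    _ ≤ _ := by gcongr

end BMReduction

section MetaAlgorithm

variable {d T : ℕ} {ι : Type*} {s : Finset ι} {ℓ p : ℕ → Fin d → ℝ}
  {Φ : ι → ℕ → Matrix (Fin d) (Fin d) ℝ} {w : ℕ → ι → ℝ}

/-- A `T`-round run of the meta algorithm: multiplicative weights `w`, with uniform prior and rate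
`√(log #s / T)`, aggregate the row-stochastic matrices `Φ a t` proposed by the base learners
`a ∈ s`, and the strategy `p t` is stationary for the aggregated matrix. -/
structure IsMetaMWU (s : Finset ι) (T : ℕ) (ℓ p : ℕ → Fin d → ℝ)
    (Φ : ι → ℕ → Matrix (Fin d) (Fin d) ℝ) (w : ℕ → ι → ℝ) : Prop where
  loss_mem : ∀ t ∈ Finset.Icc 1 T, ∀ i, 0 ≤ ℓ t i ∧ ℓ t i ≤ 1
  strategy_mem : ∀ t ∈ Finset.Icc 1 T, InSimplex d (p t)
  rowStochastic : ∀ a ∈ s, ∀ t ∈ Finset.Icc 1 T, RowStochastic (Φ a t)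
  weight_one : ∀ a ∈ s, w 1 a = 1 / #s
  weight_succ : ∀ t ∈ Finset.Icc 1 T, ∀ a ∈ s, w (t + 1) a =
    expWeights s (w t) (√(Real.log #s / T)) (fun b => lossInner (Φ b t) (p t) (ℓ t)) a
  stationary : ∀ t ∈ Finset.Icc 1 T, ∀ i, p t i = ∑ j, (∑ a ∈ s, w t a • Φ a t) j i * p t j

lemma IsMetaMWU.sum_mul_loss (run : IsMetaMWU s T ℓ p Φ w) {t : ℕ} (ht : t ∈ Finset.Icc 1 T) :
    ∑ i, p t i * ℓ t i = ∑ a ∈ s, w t a * lossInner (Φ a t) (p t) (ℓ t) := by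
  rw [← lossInner_sum_smul, lossInner_eq_sum_pushforward]
  exact Finset.sum_congr rfl fun i _ => by rw [← run.stationary t ht i]

theorem IsMetaMWU.phiRegret_le (run : IsMetaMWU s T ℓ p Φ w) (hs : 1 < #s) (hT : 0 < T) {a : ι}
    (ha : a ∈ s) (φ : Matrix (Fin d) (Fin d) ℝ) :
    phiRegret T ℓ p φ ≤ 3 / 2 * √(T * Real.log #s) +
      ∑ t ∈ Finset.Icc 1 T, (lossInner (Φ a t) (p t) (ℓ t) - lossInner φ (p t) (ℓ t)) := by
  have hmeta := mwu_uniform_regret_le (g := fun t b => lossInner (Φ b t) (p t) (ℓ t)) hs hT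
    (fun t ht b hb => lossInner_mem_Icc (run.rowStochastic b hb t ht) (run.strategy_mem t ht)
      (run.loss_mem t ht)) run.weight_one run.weight_succ ha
  have hsplit : phiRegret T ℓ p φ =
      ∑ t ∈ Finset.Icc 1 T, (∑ b ∈ s, w t b * lossInner (Φ b t) (p t) (ℓ t) -
        lossInner (Φ a t) (p t) (ℓ t)) +
      ∑ t ∈ Finset.Icc 1 T, (lossInner (Φ a t) (p t) (ℓ t) - lossInner φ (p t) (ℓ t)) := by
    rw [phiRegret_eq, ← Finset.sum_add_distrib]
    exact Finset.sum_congr rfl fun t ht => by rw [run.sum_mul_loss ht]; ring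
  linarith

end MetaAlgorithm

section SpecialPrior

variable {d : ℕ}

/-- The mixture of the binary matrix of `σ` with the uniform matrix whose coefficients are those of
`psiK` and `psiSelf`: constant maps `σ` give the matrices `ψ^k`, `k ≤ d`, and the identity gives
`ψ^{d+1}`. -/
noncomputable def smoothMat (d : ℕ) (σ : Fin d → Fin d) : Matrix (Fin d) (Fin d) ℝ :=
  fun i j => ((d : ℝ) - 2) / ((d : ℝ) - 1) * toMat d σ i j + 1 / ((d : ℝ) * ((d : ℝ) - 1))

lemma psiK_eq_smoothMat (k : Fin d) : psiK d k = smoothMat d fun _ => k := by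
  ext i j
  simp [psiK, smoothMat, toMat, eq_comm]

lemma psiSelf_eq_smoothMat : psiSelf d = smoothMat d id := rfl

lemma psiAll_succ (k : Fin d) : psiAll d (k + 1) = psiK d k := by
  ext i j
  simp [psiAll, psiK, k.isLt.ne, Fin.ext_iff]

lemma psiAll_last : psiAll d (d + 1) = psiSelf d := if_pos rfl

lemma exists_psiAll_eq_smoothMat {k : ℕ} (hk : k ∈ Finset.Icc 1 (d + 1)) :
    ∃ σ, psiAll d k = smoothMat d σ := by
  obtain ⟨hk₁, hkd⟩ := Finset.mem_Icc.1 hk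
  rcases hkd.eq_or_lt with rfl | hlt
  · exact ⟨id, psiAll_last.trans psiSelf_eq_smoothMat⟩
  · obtain ⟨k, rfl⟩ := Nat.exists_eq_add_of_le' hk₁
    exact ⟨_, (psiAll_succ ⟨k, by omega⟩).trans (psiK_eq_smoothMat _)⟩

lemma inv_sq_le_smoothMat (hd : 2 ≤ d) (σ : Fin d → Fin d) (i j : Fin d) :
    ((d : ℝ) ^ 2)⁻¹ ≤ smoothMat d σ i j := by
  have hd' : (2 : ℝ) ≤ d := by exact_mod_cast hd
  have hcoef : 0 ≤ ((d : ℝ) - 2) / ((d : ℝ) - 1) := div_nonneg (by linarith) (by linarith)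
  have htoMat : 0 ≤ toMat d σ i j := by unfold toMat; positivity
  have hunif : ((d : ℝ) ^ 2)⁻¹ ≤ 1 / ((d : ℝ) * ((d : ℝ) - 1)) := by
    rw [← one_div]
    exact one_div_le_one_div_of_le (by nlinarith) (by nlinarith)
  exact hunif.trans (le_add_of_nonneg_left (mul_nonneg hcoef htoMat))

lemma smoothMat_pos (hd : 2 ≤ d) (σ : Fin d → Fin d) (i j : Fin d) : 0 < smoothMat d σ i j :=
  (by positivity : (0 : ℝ) < ((d : ℝ) ^ 2)⁻¹).trans_le (inv_sq_le_smoothMat hd σ i j)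

lemma smoothMat_apply_self (hd : 2 ≤ d) (σ : Fin d → Fin d) (i : Fin d) :
    smoothMat d σ i (σ i) = 1 - 1 / d := by
  have hd' : (2 : ℝ) ≤ d := by exact_mod_cast hd
  have hd₁ : (d : ℝ) - 1 ≠ 0 := by linarith
  simp only [smoothMat, toMat, if_true]
  field_simp
  ring

lemma rowStochastic_smoothMat (hd : 2 ≤ d) (σ : Fin d → Fin d) :
    RowStochastic (smoothMat d σ) := by
  have hd' : (2 : ℝ) ≤ d := by exact_mod_cast hd
  have hd₁ : (d : ℝ) - 1 ≠ 0 := by linarith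
  refine fun i => ⟨fun j => (smoothMat_pos hd σ i j).le, ?_⟩
  simp only [smoothMat, toMat, Finset.sum_add_distrib, ← Finset.mul_sum, Finset.sum_ite_eq,
    Finset.mem_univ, if_true, Finset.sum_const, Finset.card_univ, Fintype.card_fin, nsmul_eq_mul]
  field_simp
  ring

lemma rowStochastic_psiAll (hd : 2 ≤ d) {k : ℕ} (hk : k ∈ Finset.Icc 1 (d + 1)) :
    RowStochastic (psiAll d k) := by
  obtain ⟨σ, hσ⟩ := exists_psiAll_eq_smoothMat hk
  exact hσ ▸ rowStochastic_smoothMat hd σ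

lemma neg_log_smoothMat_le (hd : 2 ≤ d) (σ : Fin d → Fin d) (i j : Fin d) :
    -Real.log (smoothMat d σ i j) ≤ 2 * Real.log d := by
  have hlog := Real.log_le_log (by positivity) (inv_sq_le_smoothMat hd σ i j)
  rw [Real.log_inv, Real.log_pow] at hlog
  push_cast at hlog
  linarith

lemma neg_log_smoothMat_self_le (hd : 2 ≤ d) (σ : Fin d → Fin d) (i : Fin d) :
    -Real.log (smoothMat d σ i (σ i)) ≤ 2 / d := by
  have hd' : (2 : ℝ) ≤ d := by exact_mod_cast hd
  have hpos : (0 : ℝ) < d - 1 := by linarith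
  have hinv : (1 - 1 / (d : ℝ))⁻¹ - 1 = 1 / (d - 1) := by
    rw [one_sub_div (by positivity), inv_div]
    field_simp
    ring
  calc -Real.log (smoothMat d σ i (σ i)) = Real.log (1 - 1 / (d : ℝ))⁻¹ := by
        rw [smoothMat_apply_self hd, Real.log_inv]
    _ ≤ (1 - 1 / (d : ℝ))⁻¹ - 1 := by
        refine Real.log_le_sub_one_of_pos (inv_pos.2 ?_)
        rw [← smoothMat_apply_self hd σ i]
        exact smoothMat_pos hd σ i _
    _ ≤ 2 / d := by
        rw [hinv, div_le_div_iff₀ hpos (by positivity)]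
        linarith

lemma neg_log_piInd_smoothMat_le (hd : 2 ≤ d) (σ f : Fin d → Fin d) :
    -Real.log (piInd (smoothMat d σ) (toMat d f)) ≤
      2 + 2 * #{i | f i ≠ σ i} * Real.log d := by
  rw [neg_log_piInd_toMat fun i => smoothMat_pos hd σ i _]
  calc ∑ i, -Real.log (smoothMat d σ i (f i))
      ≤ ∑ i, (2 / (d : ℝ) + if f i ≠ σ i then 2 * Real.log d else 0) := by
        refine Finset.sum_le_sum fun i _ => ?_
        split_ifs with hi
        · exact (neg_log_smoothMat_le hd σ i _).trans (le_add_of_nonneg_left (by positivity))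
        · rw [not_ne_iff.1 hi, add_zero]
          exact neg_log_smoothMat_self_le hd σ i
    _ = 2 + 2 * #{i | f i ≠ σ i} * Real.log d := by
        rw [Finset.sum_add_distrib, ← Finset.sum_filter, Finset.sum_const, Finset.sum_const,
          Finset.card_univ, Fintype.card_fin, nsmul_eq_mul, nsmul_eq_mul,
          mul_div_cancel₀ _ (by positivity)]
        ring

lemma piInd_smoothMat_pos (hd : 2 ≤ d) (σ f : Fin d → Fin d) :
    0 < piInd (smoothMat d σ) (toMat d f) := by
  rw [piInd_toMat]
  exact Finset.prod_pos fun i _ => smoothMat_pos hd σ i _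

lemma neg_log_piInd_smoothMat_nonneg (hd : 2 ≤ d) (σ f : Fin d → Fin d) :
    0 ≤ -Real.log (piInd (smoothMat d σ) (toMat d f)) := by
  rw [neg_log_piInd_toMat fun i => smoothMat_pos hd σ i _]
  refine Finset.sum_nonneg fun i _ => neg_nonneg.2 (Real.log_nonpos ?_ ?_)
  · exact (smoothMat_pos hd σ i _).le
  · exact (rowStochastic_smoothMat hd σ i).2 ▸ Finset.single_le_sum
      (fun j _ => (smoothMat_pos hd σ i j).le) (Finset.mem_univ (f i))

lemma neg_log_piInd_smoothMat_le_two_mul_sq (hd : 2 ≤ d) (σ f : Fin d → Fin d) :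
    -Real.log (piInd (smoothMat d σ) (toMat d f)) ≤ 2 * (d : ℝ) ^ 2 := by
  have hd' : (2 : ℝ) ≤ d := by exact_mod_cast hd
  have hcard : (#{i | f i ≠ σ i} : ℝ) ≤ d := by
    exact_mod_cast (Finset.card_le_univ _).trans_eq (Fintype.card_fin d)
  have hlog : Real.log d ≤ d - 1 := Real.log_le_sub_one_of_pos (by positivity)
  have hmul : #{i | f i ≠ σ i} * Real.log d ≤ d * (d - 1) :=
    mul_le_mul hcard hlog (Real.log_natCast_nonneg d) (by positivity)
  linarith [neg_log_piInd_smoothMat_le hd σ f]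

lemma exists_priorPi_le_piInd_psiAll (hd : d ≠ 0) (φ : Matrix (Fin d) (Fin d) ℝ) :
    ∃ k ∈ Finset.Icc 1 (d + 1), priorPi d φ ≤ piInd (psiAll d k) φ := by
  by_contra! hlt
  have hself : piInd (psiSelf d) φ < priorPi d φ := psiAll_last ▸ hlt (d + 1) (by simp)
  have hunif : ∑ k, piInd (psiK d k) φ ≤ d * priorPi d φ := by
    calc ∑ k, piInd (psiK d k) φ ≤ ∑ _k : Fin d, priorPi d φ :=
          Finset.sum_le_sum fun k _ => psiAll_succ k ▸ (hlt (k + 1) (by simp)).le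
      _ = d * priorPi d φ := by simp
  have havg : 1 / (2 * (d : ℝ)) * ∑ k, piInd (psiK d k) φ ≤ priorPi d φ / 2 := by
    refine (mul_le_mul_of_nonneg_left hunif (by positivity)).trans_eq ?_
    field_simp
  have hdef : priorPi d φ =
      1 / (2 * (d : ℝ)) * ∑ k, piInd (psiK d k) φ + 1 / 2 * piInd (psiSelf d) φ := rfl
  linarith

lemma half_mul_piInd_psiSelf_le_priorPi (hd : 2 ≤ d) (f : Fin d → Fin d) :
    1 / 2 * piInd (psiSelf d) (toMat d f) ≤ priorPi d (toMat d f) := by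
  refine le_add_of_nonneg_left (mul_nonneg (by positivity) (Finset.sum_nonneg fun k _ => ?_))
  rw [psiK_eq_smoothMat]
  exact (piInd_smoothMat_pos hd _ f).le

lemma mul_piInd_psiK_le_priorPi (hd : 2 ≤ d) (k : Fin d) (f : Fin d → Fin d) :
    1 / (2 * d) * piInd (psiK d k) (toMat d f) ≤ priorPi d (toMat d f) := by
  have hnonneg : ∀ k, 0 ≤ piInd (psiK d k) (toMat d f) := fun k => by
    rw [psiK_eq_smoothMat]
    exact (piInd_smoothMat_pos hd _ f).le
  refine le_add_of_le_of_nonneg (mul_le_mul_of_nonneg_left ?_ (by positivity))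
    (mul_nonneg (by norm_num) (piInd_smoothMat_pos hd id f).le)
  exact Finset.single_le_sum (fun k _ => hnonneg k) (Finset.mem_univ k)

lemma priorPi_toMat_pos (hd : 2 ≤ d) (f : Fin d → Fin d) : 0 < priorPi d (toMat d f) :=
  (mul_pos (by norm_num) (piInd_smoothMat_pos hd id f)).trans_le
    (half_mul_piInd_psiSelf_le_priorPi hd f)

lemma neg_log_le_of_one_div_mul_le {a x y : ℝ} (ha : 0 < a) (hx : 0 < x) (h : 1 / a * x ≤ y) :
    -Real.log y ≤ Real.log a - Real.log x := by
  have hlog := Real.log_le_log (by positivity) h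
  rw [Real.log_mul (by positivity) hx.ne', one_div, Real.log_inv] at hlog
  linarith

end SpecialPrior

section Complexity

variable {d : ℕ}

lemma mem_PhiB {φ : Matrix (Fin d) (Fin d) ℝ} : φ ∈ PhiB d ↔ ∃ f, toMat d f = φ := by
  simp [PhiB]

lemma toMat_row_eq_iff (f : Fin d → Fin d) (i k : Fin d) :
    (toMat d f i = fun j => if j = k then (1 : ℝ) else 0) ↔ f i = k := by
  refine ⟨fun h => by simpa [toMat] using congrFun h k, ?_⟩
  rintro rfl
  funext j
  simp [toMat, eq_comm]

lemma card_filter_ne (f σ : Fin d → Fin d) :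
    #{i | f i ≠ σ i} = d - #{i | f i = σ i} := by
  rw [Finset.filter_not, Finset.card_sdiff_of_subset (Finset.filter_subset _ _), Finset.card_univ,
    Fintype.card_fin]

lemma sub_dSelf_toMat (f : Fin d → Fin d) : d - dSelf (toMat d f) = #{i | f i ≠ i} := by
  refine Eq.trans ?_ (card_filter_ne f id).symm
  simp only [dSelf, toMat_row_eq_iff, id]
  rw [Nat.card_eq_fintype_card, Fintype.card_subtype]

lemma exists_sub_dUnif_toMat (hd : d ≠ 0) (f : Fin d → Fin d) :
    ∃ k, d - dUnif (toMat d f) = #{i | f i ≠ k} := by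
  have : NeZero d := ⟨hd⟩
  obtain ⟨i, -, hi⟩ := Finset.exists_mem_eq_sup Finset.univ Finset.univ_nonempty
    fun i : Fin d => Nat.card {j : Fin d // toMat d f j = toMat d f i}
  refine ⟨f i, ?_⟩
  rw [card_filter_ne f fun _ => f i, dUnif, hi]
  simp only [(toMat_row_eq_iff f i (f i)).2 rfl, toMat_row_eq_iff]
  rw [Nat.card_eq_fintype_card, Fintype.card_subtype]

theorem neg_log_priorPi_toMat_le (hd : 2 ≤ d) (f : Fin d → Fin d) :
    -Real.log (priorPi d (toMat d f)) ≤ 3 + 2 * cB (toMat d f) * Real.log d := by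
  have hlog2 : Real.log 2 ≤ 1 := by linarith [Real.log_two_lt_d9]
  have hlogd : 0 ≤ Real.log d := Real.log_natCast_nonneg d
  have hself : -Real.log (priorPi d (toMat d f)) ≤
      3 + 2 * (d - dSelf (toMat d f) : ℕ) * Real.log d := by
    have hprior := neg_log_le_of_one_div_mul_le two_pos (piInd_smoothMat_pos hd id f)
      (half_mul_piInd_psiSelf_le_priorPi hd f)
    have hpiInd := neg_log_piInd_smoothMat_le hd id f
    rw [sub_dSelf_toMat]
    simp only [id] at hpiInd
    linarith
  have hunif : -Real.log (priorPi d (toMat d f)) ≤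
      3 + 2 * (d - dUnif (toMat d f) + 1 : ℕ) * Real.log d := by
    obtain ⟨k, hk⟩ := exists_sub_dUnif_toMat (by omega) f
    have hprior := neg_log_le_of_one_div_mul_le (by positivity)
      (piInd_smoothMat_pos hd (fun _ => k) f)
      (psiK_eq_smoothMat k ▸ mul_piInd_psiK_le_priorPi hd k f)
    have hpiInd := neg_log_piInd_smoothMat_le hd (fun _ => k) f
    rw [Real.log_mul two_ne_zero (by positivity)] at hprior
    rw [hk]
    push_cast
    linarith
  rw [cB]
  exact min_rec' (fun c : ℕ => -Real.log (priorPi d (toMat d f)) ≤ 3 + 2 * c * Real.log d)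
    hself hunif

end Complexity

section StochasticComparators

variable {d T : ℕ} {ℓ p : ℕ → Fin d → ℝ} {φ : Matrix (Fin d) (Fin d) ℝ}

-- The witness draws the rows of the binary matrix independently from the rows of `φ`.
lemma QSet_nonempty (hφ : RowStochastic φ) : (QSet d φ).Nonempty := by
  refine ⟨fun f => ∏ i, φ i (f i), fun f => Finset.prod_nonneg fun i _ => (hφ i).1 _, ?_, ?_⟩
  · exact (Fintype.prod_sum fun i j => φ i j).symm.trans (Finset.prod_eq_one fun i _ => (hφ i).2)
  · intro i₀ j₀
    calc ∑ f : Fin d → Fin d, (∏ i, φ i (f i)) * toMat d f i₀ j₀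
        = ∑ f : Fin d → Fin d,
            ∏ i, φ i (f i) * if i = i₀ then (if f i = j₀ then 1 else 0) else 1 := by
          simp only [Finset.prod_mul_distrib, Finset.prod_ite_eq', Finset.mem_univ, if_true, toMat]
      _ = ∏ i, ∑ j, φ i j * if i = i₀ then (if j = j₀ then 1 else 0) else 1 :=
          (Fintype.prod_sum fun i j => φ i j * if i = i₀ then (if j = j₀ then 1 else 0) else 1).symm
      _ = φ i₀ j₀ := by
          rw [Finset.prod_eq_single i₀ (fun i _ hi => by simp [hi, (hφ i).2]) (by simp)]
          simp

lemma sum_smul_toMat_of_mem_QSet {q : (Fin d → Fin d) → ℝ} (hq : q ∈ QSet d φ) :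
    ∑ f, q f • toMat d f = φ := by
  ext i j
  simpa [Matrix.sum_apply] using hq.2.2 i j

theorem phiRegret_le_apply_cGen {F : ℝ → ℝ} (hconc : ConcaveOn ℝ (Set.Ici 0) F) (hmono : Monotone F)
    (hcont : Continuous F) (hF : ∀ f, phiRegret T ℓ p (toMat d f) ≤ F (cB (toMat d f)))
    (hφ : RowStochastic φ) : phiRegret T ℓ p φ ≤ F (cGen d φ) := by
  have hmix : ∀ q ∈ QSet d φ, phiRegret T ℓ p φ ≤ F (∑ f, q f * cB (toMat d f)) := by
    intro q hq
    calc phiRegret T ℓ p φ = ∑ f, q f * phiRegret T ℓ p (toMat d f) := by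
          rw [← sum_smul_toMat_of_mem_QSet hq, phiRegret_sum_smul hq.2.1]
      _ ≤ ∑ f, q f * F (cB (toMat d f)) :=
          Finset.sum_le_sum fun f _ => mul_le_mul_of_nonneg_left (hF f) (hq.1 f)
      _ ≤ F (∑ f, q f * cB (toMat d f)) :=
          hconc.le_map_sum (fun f _ => hq.1 f) hq.2.1 fun f _ => Set.mem_Ici.2 (Nat.cast_nonneg _)
  have hne := (QSet_nonempty hφ).image fun q => ∑ f, q f * (cB (toMat d f) : ℝ)
  have hbdd : BddBelow ((fun q => ∑ f, q f * (cB (toMat d f) : ℝ)) '' QSet d φ) := by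
    refine ⟨0, ?_⟩
    rintro _ ⟨q, hq, rfl⟩
    exact Finset.sum_nonneg fun f _ => mul_nonneg (hq.1 f) (Nat.cast_nonneg _)
  rw [cGen, hmono.map_csInf_of_continuousAt hcont.continuousAt hne hbdd]
  refine le_csInf (hne.image F) ?_
  rintro _ ⟨_, ⟨q, hq, rfl⟩, rfl⟩
  exact hmix q hq

lemma concaveOn_sqrt_affine {a b : ℝ} (ha : 0 ≤ a) (hb : 0 ≤ b) :
    ConcaveOn ℝ (Set.Ici 0) fun x => √(a + b * x) := by
  refine ⟨convex_Ici 0, fun x hx y hy α β hα hβ hαβ => ?_⟩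
  have hmem : ∀ {z : ℝ}, z ∈ Set.Ici 0 → a + b * z ∈ Set.Ici 0 := fun hz =>
    add_nonneg ha (mul_nonneg hb hz)
  have haffine : α • (a + b * x) + β • (a + b * y) = a + b * (α • x + β • y) := by
    simp only [smul_eq_mul]
    linear_combination a * hαβ
  simpa only [haffine] using
    Real.strictConcaveOn_sqrt.concaveOn.2 (hmem hx) (hmem hy) hα hβ hαβ

end StochasticComparators

section AdaptiveMetaAlgorithm

variable {d T : ℕ} {ℓ p : ℕ → Fin d → ℝ} {Φ : ℕ × ℕ → ℕ → Matrix (Fin d) (Fin d) ℝ}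
  {w : ℕ → ℕ × ℕ → ℝ}

/-- The index set `[d + 1] × [M]`, with `M = 2 ⌈log₂ d⌉`, of the base learners `(k, h)`. -/
def baseLearners (d : ℕ) : Finset (ℕ × ℕ) :=
  Finset.Icc 1 (d + 1) ×ˢ Finset.Icc 1 (2 * Nat.clog 2 d)

lemma card_baseLearners (d : ℕ) :
    (#(baseLearners d) : ℝ) = (d + 1 : ℝ) * (2 * Nat.clog 2 d : ℝ) := by
  simp [baseLearners]

lemma one_lt_card_baseLearners (hd : 2 ≤ d) : 1 < #(baseLearners d) := by
  have hclog : 0 < Nat.clog 2 d := Nat.clog_pos one_lt_two hd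
  simp only [baseLearners, Finset.card_product, Nat.card_Icc, Nat.add_sub_cancel]
  nlinarith

lemma log_card_baseLearners_le (hd : 2 ≤ d) :
    Real.log #(baseLearners d) ≤ 4 * Real.log d := by
  have hclog : Nat.clog 2 d ≤ d := Nat.clog_le_of_le_pow Nat.lt_two_pow_self.le
  have hcard : #(baseLearners d) ≤ d ^ 4 := by
    calc #(baseLearners d) = (d + 1) * (2 * Nat.clog 2 d) := by simp [baseLearners]
      _ ≤ d ^ 2 * d ^ 2 := Nat.mul_le_mul (by nlinarith) (by nlinarith)
      _ = d ^ 4 := by ring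
  have hpos : 0 < #(baseLearners d) := by linarith [one_lt_card_baseLearners hd]
  calc Real.log #(baseLearners d) ≤ Real.log ((d : ℝ) ^ 4) :=
        Real.log_le_log (by exact_mod_cast hpos) (by exact_mod_cast hcard)
    _ = 4 * Real.log d := by rw [Real.log_pow]; norm_num

lemma sq_le_two_pow_two_mul_clog (d : ℕ) : (d : ℝ) ^ 2 ≤ 2 ^ (2 * Nat.clog 2 d) := by
  rw [mul_comm, pow_mul]
  exact_mod_cast Nat.pow_le_pow_left (Nat.le_pow_clog one_lt_two d) 2

lemma quarter_le_log (hd : 2 ≤ d) : 1 / 4 ≤ Real.log d := by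
  have hlog := Real.log_le_log two_pos (by exact_mod_cast hd : (2 : ℝ) ≤ d)
  linarith [Real.log_two_gt_d9]

lemma exists_baseLearner_regret_le (hd : 2 ≤ d) (hT : 0 < T)
    (hℓ : ∀ t ∈ Finset.Icc 1 T, ∀ i, 0 ≤ ℓ t i ∧ ℓ t i ≤ 1)
    (hp : ∀ t ∈ Finset.Icc 1 T, InSimplex d (p t)) (f : Fin d → Fin d) :
    ∃ a ∈ baseLearners d, ∑ t ∈ Finset.Icc 1 T,
        (lossInner (bmMatrix (psiAll d a.1) (√((2 : ℝ) ^ a.2 / T)) ℓ p t) (p t) (ℓ t) -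
          lossInner (toMat d f) (p t) (ℓ t)) ≤
      2 * √(T * -Real.log (priorPi d (toMat d f))) + √T := by
  have hT' : (0 : ℝ) < T := by positivity
  have hclog : 0 < Nat.clog 2 d := Nat.clog_pos one_lt_two hd
  obtain ⟨k, hk, hprior⟩ := exists_priorPi_le_piInd_psiAll (by omega) (toMat d f)
  obtain ⟨σ, hσ⟩ := exists_psiAll_eq_smoothMat hk
  set L := -Real.log (piInd (smoothMat d σ) (toMat d f)) with hL
  have hlog : L ≤ -Real.log (priorPi d (toMat d f)) := by
    rw [hL, ← hσ]
    exact neg_le_neg (Real.log_le_log (priorPi_toMat_pos hd f) hprior)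
  have hL₀ : 0 ≤ L := neg_log_piInd_smoothMat_nonneg hd σ f
  obtain ⟨h, hh, hlow, hhigh⟩ := exists_two_pow_near (M := 2 * Nat.clog 2 d) (by omega) hL₀
    ((neg_log_piInd_smoothMat_le_two_mul_sq hd σ f).trans
      (mul_le_mul_of_nonneg_left (sq_le_two_pow_two_mul_clog d) zero_le_two))
  refine ⟨(k, h), Finset.mk_mem_product hk hh, ?_⟩
  rw [hσ]
  calc _ ≤ L / √(2 ^ h / T) + √(2 ^ h / T) / 2 * T :=
        bmMatrix_regret_le (rowStochastic_smoothMat hd σ) (fun i => smoothMat_pos hd σ i _)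
          (Real.sqrt_pos.2 (by positivity)) hℓ hp
    _ ≤ 2 * √(T * L) + √T := div_sqrt_add_sqrt_mul_le hT' (by positivity) hL₀ hlow hhigh
    _ ≤ _ := by gcongr

theorem IsMetaMWU.phiRegret_toMat_le (run : IsMetaMWU (baseLearners d) T ℓ p Φ w)
    (hΦ : ∀ a ∈ baseLearners d, ∀ t ∈ Finset.Icc 1 T,
      Φ a t = bmMatrix (psiAll d a.1) (√((2 : ℝ) ^ a.2 / T)) ℓ p t)
    (hd : 2 ≤ d) (hT : 0 < T) (f : Fin d → Fin d) :
    phiRegret T ℓ p (toMat d f) ≤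
      5 * (√(T * -Real.log (priorPi d (toMat d f))) + √(T * Real.log d)) := by
  obtain ⟨a, ha, hbase⟩ := exists_baseLearner_regret_le hd hT run.loss_mem run.strategy_mem f
  have hmeta := run.phiRegret_le (one_lt_card_baseLearners hd) hT ha (toMat d f)
  rw [Finset.sum_congr rfl fun t ht => by rw [hΦ a ha t ht]] at hmeta
  have htwo : ∀ x : ℝ, 2 * √x = √(4 * x) := fun x => by
    rw [Real.sqrt_mul (by norm_num), show (4 : ℝ) = 2 ^ 2 by norm_num, Real.sqrt_sq zero_le_two]
  have hcard : √(T * Real.log #(baseLearners d)) ≤ 2 * √(T * Real.log d) := by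
    rw [htwo]
    exact Real.sqrt_le_sqrt (by nlinarith [log_card_baseLearners_le hd])
  have hsqrtT : √T ≤ 2 * √(T * Real.log d) := by
    rw [htwo]
    exact Real.sqrt_le_sqrt (by nlinarith [quarter_le_log hd])
  linarith [Real.sqrt_nonneg (T * -Real.log (priorPi d (toMat d f)))]

theorem phiRegret_le_of_forall_toMat {C : ℝ} (hd : 2 ≤ d) (hC : 0 ≤ C)
    (hbin : ∀ f, phiRegret T ℓ p (toMat d f) ≤
      C * (√(T * -Real.log (priorPi d (toMat d f))) + √(T * Real.log d)))
    {φ : Matrix (Fin d) (Fin d) ℝ} (hφ : RowStochastic φ) :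
    phiRegret T ℓ p φ ≤ 2 * C * (√((1 + cGen d φ * Real.log d) * T) + √(T * Real.log d)) := by
  refine phiRegret_le_apply_cGen
    (F := fun x => 2 * C * (√((1 + x * Real.log d) * T) + √(T * Real.log d)))
    ?_ (fun x y hxy => by dsimp only; gcongr) (by fun_prop) (fun f => (hbin f).trans ?_) hφ
  · have hconc := concaveOn_sqrt_affine (a := T) (b := T * Real.log d) (by positivity)
      (by positivity)
    have hfun : (fun x : ℝ => 2 * C * (√((1 + x * Real.log d) * T) + √(T * Real.log d))) =
        fun x => (2 * C) • (√(T + T * Real.log d * x) + √(T * Real.log d)) := by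
      funext x
      rw [smul_eq_mul]
      ring_nf
    rw [hfun]
    exact (hconc.add_const _).smul (by positivity)
  · have hprior : √(T * -Real.log (priorPi d (toMat d f))) ≤
        2 * √((1 + cB (toMat d f) * Real.log d) * T) := by
      refine Real.sqrt_le_iff.2 ⟨by positivity, ?_⟩
      rw [mul_pow, Real.sq_sqrt (by positivity)]
      have hcB : 0 ≤ cB (toMat d f) * Real.log d := by positivity
      nlinarith [neg_log_priorPi_toMat_le hd f]
    nlinarith [Real.sqrt_nonneg (T * Real.log d)]

end AdaptiveMetaAlgorithm


/-- The meta MWU algorithm over `(d+1)·M` prior-aware BM-reductions (base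
learner `(k,h)` is the prior-aware BM-reduction with prior `ψ^k` and learning rate
`η_h = √(2^h/T)`; the meta learner is MWU with uniform prior and rate `√(log((d+1)M)/T)`; the
played `p_t` is a stationary distribution of the weighted average matrix) achieves
comparator-adaptive Φ-regret: there are universal `C, C' > 0` such that, for all `d ≥ 2`,
`T ≥ 1` and losses in `[0,1]^d`, `Reg(φ) ≤ C (√(T log(1/π(φ))) + √(T log d))` for every
`φ ∈ Φ_b`, and consequently `Reg(φ) ≤ C' (√((1 + c_φ log d) T) + √(T log d))` for every
row-stochastic `φ`. -/
theorem stmt14 :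
    ∃ C > (0 : ℝ), ∃ C' > (0 : ℝ),
      ∀ (d T : ℕ), 2 ≤ d → 1 ≤ T →
      ∀ (ℓ p : ℕ → Fin d → ℝ) (Φ : ℕ → ℕ → ℕ → Matrix (Fin d) (Fin d) ℝ)
        (w : ℕ → ℕ → ℕ → ℝ),
        (∀ t ∈ Finset.Icc 1 T, ∀ i, 0 ≤ ℓ t i ∧ ℓ t i ≤ 1) →
        (∀ t ∈ Finset.Icc 1 T, InSimplex d (p t)) →
        -- base learner `(k,h)`: prior-aware BM-reduction with prior `ψ^k` and rate `√(2^h/T)`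
        (∀ k ∈ Finset.Icc 1 (d + 1), ∀ h ∈ Finset.Icc 1 (2 * Nat.clog 2 d),
          ∀ t ∈ Finset.Icc 1 T, ∀ i j,
            Φ k h t i j =
              psiAll d k i j *
                  Real.exp (-Real.sqrt ((2 : ℝ) ^ h / (T : ℝ)) *
                    ∑ τ ∈ Finset.Ico 1 t, p τ i * ℓ τ j) /
                ∑ j', psiAll d k i j' *
                  Real.exp (-Real.sqrt ((2 : ℝ) ^ h / (T : ℝ)) *
                    ∑ τ ∈ Finset.Ico 1 t, p τ i * ℓ τ j')) →
        -- meta learner: MWU over the `(d+1)·M` base learners with uniform prior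
        (∀ k ∈ Finset.Icc 1 (d + 1), ∀ h ∈ Finset.Icc 1 (2 * Nat.clog 2 d),
          w 1 k h = 1 / ((d + 1 : ℝ) * (2 * Nat.clog 2 d : ℝ))) →
        (∀ t ∈ Finset.Icc 1 T, ∀ k ∈ Finset.Icc 1 (d + 1),
          ∀ h ∈ Finset.Icc 1 (2 * Nat.clog 2 d),
            w (t + 1) k h =
              w t k h *
                  Real.exp (-Real.sqrt (Real.log ((d + 1 : ℝ) * (2 * Nat.clog 2 d : ℝ)) / (T : ℝ)) *
                    lossInner (Φ k h t) (p t) (ℓ t)) /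
                ∑ k' ∈ Finset.Icc 1 (d + 1), ∑ h' ∈ Finset.Icc 1 (2 * Nat.clog 2 d),
                  w t k' h' *
                    Real.exp (-Real.sqrt (Real.log ((d + 1 : ℝ) * (2 * Nat.clog 2 d : ℝ)) / (T : ℝ)) *
                      lossInner (Φ k' h' t) (p t) (ℓ t))) →
        -- `p_t` is a stationary distribution of `φ_t = Σ_{(k,h)} w_{t,(k,h)} φ_t^{k,h}`
        (∀ t ∈ Finset.Icc 1 T, ∀ i,
          p t i = ∑ j, (∑ k ∈ Finset.Icc 1 (d + 1), ∑ h ∈ Finset.Icc 1 (2 * Nat.clog 2 d),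
            w t k h * Φ k h t j i) * p t j) →
        (∀ φ ∈ PhiB d,
          (∑ t ∈ Finset.Icc 1 T, ∑ i, (p t i - ∑ j, φ j i * p t j) * ℓ t i) ≤
            C * (Real.sqrt ((T : ℝ) * Real.log (1 / priorPi d φ)) +
              Real.sqrt ((T : ℝ) * Real.log d))) ∧
        (∀ φ : Matrix (Fin d) (Fin d) ℝ, RowStochastic φ →
          (∑ t ∈ Finset.Icc 1 T, ∑ i, (p t i - ∑ j, φ j i * p t j) * ℓ t i) ≤
            C' * (Real.sqrt ((1 + cGen d φ * Real.log d) * (T : ℝ)) +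
              Real.sqrt ((T : ℝ) * Real.log d))) := by
  refine ⟨5, by norm_num, 2 * 5, by norm_num, ?_⟩
  intro d T hd hT ℓ p Φ w hℓ hp hΦ hw₁ hw hstat
  have hgrid := fun a (ha : a ∈ baseLearners d) => Finset.mem_product.1 ha
  have hbase : ∀ a ∈ baseLearners d, ∀ t ∈ Finset.Icc 1 T,
      Φ a.1 a.2 t = bmMatrix (psiAll d a.1) (√((2 : ℝ) ^ a.2 / T)) ℓ p t := fun a ha t ht =>
    Matrix.ext fun i j => hΦ a.1 (hgrid a ha).1 a.2 (hgrid a ha).2 t ht i j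
  have run : IsMetaMWU (baseLearners d) T ℓ p (fun a => Φ a.1 a.2) (fun t a => w t a.1 a.2) := {
    loss_mem := hℓ
    strategy_mem := hp
    rowStochastic a ha t ht := hbase a ha t ht ▸
      rowStochastic_bmMatrix (rowStochastic_psiAll hd (hgrid a ha).1) t
    weight_one a ha := card_baseLearners d ▸ hw₁ a.1 (hgrid a ha).1 a.2 (hgrid a ha).2
    weight_succ t ht a ha := by
      rw [card_baseLearners]
      simpa only [expWeights, partitionFn, baseLearners, Finset.sum_product] using
        hw t ht a.1 (hgrid a ha).1 a.2 (hgrid a ha).2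
    stationary t ht i := by
      simpa only [Matrix.sum_apply, Matrix.smul_apply, smul_eq_mul, baseLearners,
        Finset.sum_product] using hstat t ht i }
  have hbin := run.phiRegret_toMat_le hbase hd hT
  refine ⟨fun φ hφ => ?_, fun φ hφ => phiRegret_le_of_forall_toMat hd (by norm_num) hbin hφ⟩
  obtain ⟨f, rfl⟩ := mem_PhiB.1 hφ
  rw [one_div, Real.log_inv]
  exact hbin f
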